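/- arXiv:1608.06728 — 2 statements merged into one kernel-verified Lean document; each statement's English description precedes it below -/
import Mathlib

section
/- There exists a constant C > 0, depending only on ψ, such that for every dyadic interval I ⊆ ℝ with |I| ≤ 1, every x ∈ ℝ and every y > 0, |F_I(x+iy)| ≤ C |I|^{-1/2} · (1 + (y/|I|)²) / (1 + ((x - C_I)/|I|)²) · e^{-2πy/3} / y^{1/2}. -/
open MeasureTheory Complex Real
open scoped FourierTransform

noncomputable section

/-- The length `|I| = 2^{-j}` of a dyadic interval of generation `j`. -/
def len (j : ℤ) : ℝ := (2 : ℝ) ^ (-j)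

/-- The center `C_I = 2^{-j}(k + 1/2)` of the dyadic interval `I = [2^{-j}k, 2^{-j}(k+1))`. -/
def ctr (j k : ℤ) : ℝ := (2 : ℝ) ^ (-j) * ((k : ℝ) + 1 / 2)

/-- `ψ_I(x) = |I|^{-1/2} ψ((x - C_I)/|I|)`. -/
def psiI (ψ : SchwartzMap ℝ ℂ) (j k : ℤ) (x : ℝ) : ℂ :=
  (((Real.sqrt (len j))⁻¹ : ℝ) : ℂ) * ψ ((x - ctr j k) / len j)

/-- The Poisson extension to the upper half-plane of `f_I = |I|^{1/2} D ψ_I`, where `D` is the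
Fourier multiplier with symbol `4π|ξ|`:
`F_I(x+iy) = ∫ 4π|ξ| |I|^{1/2} ψ̂_I(ξ) e^{-2π|ξ|y} e^{2πixξ} dξ`. -/
def FI (ψ : SchwartzMap ℝ ℂ) (j k : ℤ) (x y : ℝ) : ℂ :=
  ∫ ξ : ℝ, ((4 * π * |ξ| * Real.sqrt (len j) * Real.exp (-(2 * π * |ξ| * y)) : ℝ) : ℂ) *
    𝓕 (psiI ψ j k) ξ * Complex.exp (2 * (π : ℂ) * Complex.I * (x : ℂ) * (ξ : ℂ))

/-- The periodization `G_I(x+iy) = Σ_{k∈ℤ} F_I(x-k+iy)`. -/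
def GI (ψ : SchwartzMap ℝ ℂ) (j k : ℤ) (x y : ℝ) : ℂ :=
  ∑' m : ℤ, FI ψ j k (x - (m : ℝ)) y



lemma aux_expint (M s : ℝ) (hM : 0 ≤ M) (hs : 0 < s) (v : ℝ → ℂ) (z : ℂ) (hz : z.re = -(2 * π * s))
    (hv : ∀ η ∈ Set.Icc (1/3 : ℝ) (4/3), ‖v η‖ ≤ M) :
    ‖∫ η in (1/3 : ℝ)..(4/3), v η * Complex.exp (z * η)‖
      ≤ M * (Real.exp (-(2 * π * s / 3)) / Real.sqrt s) := by
  have hpi := Real.pi_gt_three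
  have hE := Real.exp_pos (-(2 * π * s / 3))
  have hsq := Real.sqrt_pos.2 hs
  have hss := Real.mul_self_sqrt hs.le
  have hn : ∀ η : ℝ, ‖Complex.exp (z * η)‖ = Real.exp (-(2 * π * s) * η) := by
    intro η
    rw [Complex.norm_exp]; simp [hz]
  have h1 : ‖∫ η in (1/3 : ℝ)..(4/3), v η * Complex.exp (z * η)‖
      ≤ ∫ η in (1/3 : ℝ)..(4/3), M * Real.exp (-(2 * π * s) * η) := by
    apply intervalIntegral.norm_integral_le_of_norm_le (by norm_num)
    · refine Filter.Eventually.of_forall fun η hη => ?_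
      rw [norm_mul, hn]
      exact mul_le_mul_of_nonneg_right (hv η ⟨hη.1.le, hη.2⟩) (Real.exp_pos _).le
    · exact (by fun_prop : Continuous fun η : ℝ => M * Real.exp (-(2 * π * s) * η)).intervalIntegrable _ _
  refine h1.trans ?_
  rw [intervalIntegral.integral_const_mul]
  refine mul_le_mul_of_nonneg_left ?_ hM
  rcases le_or_gt s 1 with h | h
  · have : ∫ η in (1/3 : ℝ)..(4/3), Real.exp (-(2 * π * s) * η)
        ≤ ∫ η in (1/3 : ℝ)..(4/3), Real.exp (-(2 * π * s / 3)) := by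
      apply intervalIntegral.integral_mono_on (by norm_num)
      · exact (by fun_prop : Continuous fun η : ℝ => Real.exp (-(2 * π * s) * η)).intervalIntegrable _ _
      · exact intervalIntegrable_const
      · intro η hη
        apply Real.exp_le_exp.2
        have : 0 < 2 * π * s := by positivity
        nlinarith [hη.1]
    refine this.trans ?_
    rw [intervalIntegral.integral_const, le_div_iff₀ hsq, smul_eq_mul]
    have : Real.sqrt s ≤ 1 := Real.sqrt_le_one.2 h
    nlinarith
  · have hp : 0 < 2 * π * s := by positivity
    have : ∫ η in (1/3 : ℝ)..(4/3), Real.exp (-(2 * π * s) * η)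
        = (Real.exp (-(2 * π * s / 3)) - Real.exp (-(2 * π * s) * (4/3))) / (2 * π * s) := by
      rw [intervalIntegral.integral_comp_mul_left (fun x => Real.exp x) (by linarith : -(2 * π * s) ≠ 0)]
      rw [integral_exp, smul_eq_mul,
        show -(2 * π * s) * (1/3) = -(2 * π * s / 3) by ring]
      field_simp
      ring
    rw [this]
    have h4 := Real.exp_pos (-(2 * π * s) * (4/3))
    have hs1 : 1 ≤ Real.sqrt s := Real.one_le_sqrt.2 h.le
    apply div_le_div₀ hE.le (by linarith) hsq
    nlinarith

lemma aux_core (u : ℝ → ℂ) (hu : ContDiff ℝ 2 u) (ha : u (1/3) = 0) (hb : u (4/3) = 0)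
    (ha' : deriv u (1/3) = 0) (hb' : deriv u (4/3) = 0) :
    ∃ C : ℝ, 0 ≤ C ∧ ∀ s t : ℝ, 0 < s →
      ‖∫ η in (1/3 : ℝ)..(4/3), u η * Complex.exp (((-(2 * π * s) : ℝ) + (2 * π * t : ℝ) * Complex.I) * η)‖
      ≤ C / (1 + t ^ 2) * (Real.exp (-(2 * π * s / 3)) / Real.sqrt s) := by
  have hu1 : ContDiff ℝ 1 (deriv u) := by
    have : ContDiff ℝ (1 + 1) u := by simpa [one_add_one_eq_two] using hu
    exact (contDiff_succ_iff_deriv.1 this).2.2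
  have hd0 : ∀ x, HasDerivAt u (deriv u x) x := fun x =>
    (hu.differentiable (by norm_num) x).hasDerivAt
  have hd1 : ∀ x, HasDerivAt (deriv u) (deriv (deriv u) x) x := fun x =>
    (hu1.differentiable (by norm_num) x).hasDerivAt
  have hc1 : Continuous (deriv u) := hu1.continuous
  have hc2 : Continuous (deriv (deriv u)) := hu1.continuous_deriv (by norm_num)
  obtain ⟨A, hA⟩ := (isCompact_Icc (a := (1/3 : ℝ)) (b := 4/3)).exists_bound_of_continuousOn
    hu.continuous.continuousOn
  obtain ⟨B, hB⟩ := (isCompact_Icc (a := (1/3 : ℝ)) (b := 4/3)).exists_bound_of_continuousOn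
    hc2.continuousOn
  have hA0 : 0 ≤ A := (norm_nonneg _).trans (hA (1/3) ⟨le_rfl, by norm_num⟩)
  have hB0 : 0 ≤ B := (norm_nonneg _).trans (hB (1/3) ⟨le_rfl, by norm_num⟩)
  refine ⟨A + B, by positivity, fun s t hs => ?_⟩
  set z : ℂ := ((-(2 * π * s) : ℝ) + (2 * π * t : ℝ) * Complex.I) with hzdef
  have hpi := Real.pi_gt_three
  have hzre : z.re = -(2 * π * s) := by simp [hzdef]
  have hzim : z.im = 2 * π * t := by simp [hzdef]
  have hz0 : z ≠ 0 := by
    intro h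
    have : z.re = 0 := by rw [h]; rfl
    rw [hzre] at this
    have : 0 < 2 * π * s := by positivity
    linarith
  have hE : ∀ x : ℝ, HasDerivAt (fun η : ℝ => Complex.exp (z * η) / z) (Complex.exp (z * x)) x := by
    intro x
    have h1 : HasDerivAt (fun η : ℝ => z * (η : ℂ)) z x := by
      simpa using (Complex.ofRealCLM.hasDerivAt (x := x)).const_mul z
    have := (h1.cexp).div_const z
    rwa [mul_div_cancel_right₀ _ hz0] at this
  have hEc : Continuous fun η : ℝ => Complex.exp (z * η) := by fun_prop
  have ibp : ∀ (f f' : ℝ → ℂ), (∀ x, HasDerivAt f (f' x) x) → Continuous f' → f (1/3) = 0 →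
      f (4/3) = 0 → ∫ η in (1/3 : ℝ)..(4/3), f η * Complex.exp (z * η)
        = -(∫ η in (1/3 : ℝ)..(4/3), f' η * Complex.exp (z * η)) / z := by
    intro f f' hf hf' h1 h2
    rw [intervalIntegral.integral_mul_deriv_eq_deriv_mul (fun x _ => hf x) (fun x _ => hE x)
      (hf'.intervalIntegrable _ _) (hEc.intervalIntegrable _ _), h1, h2]
    simp only [mul_div_assoc', intervalIntegral.integral_div]
    ring
  have hJ1 := aux_expint A s hA0 hs u z hzre hA
  have hJ2 := aux_expint B s hB0 hs (deriv (deriv u)) z hzre hB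
  have e1 := ibp u _ hd0 hc1 ha hb
  have e2 := ibp _ _ hd1 hc2 ha' hb'
  set J := ∫ η in (1/3 : ℝ)..(4/3), u η * Complex.exp (z * η) with hJ
  have e3 : J * z ^ 2 = ∫ η in (1/3 : ℝ)..(4/3), deriv (deriv u) η * Complex.exp (z * η) := by
    rw [e1, e2]; field_simp
  rw [← e3, norm_mul, norm_pow, Complex.sq_norm, Complex.normSq_apply, hzre, hzim] at hJ2
  set W := Real.exp (-(2 * π * s / 3)) / Real.sqrt s
  have hW : 0 ≤ W := by positivity
  rw [div_mul_eq_mul_div, le_div_iff₀ (by positivity)]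
  have : ‖J‖ * t ^ 2 ≤ ‖J‖ * (-(2 * π * s) * -(2 * π * s) + 2 * π * t * (2 * π * t)) := by
    apply mul_le_mul_of_nonneg_left _ (norm_nonneg _)
    have : 0 ≤ (π^2 - 1) * t^2 := mul_nonneg (by nlinarith) (sq_nonneg _)
    nlinarith [sq_nonneg (π * s), sq_nonneg t]
  nlinarith

lemma aux_zero (f : ℝ → ℂ) (hf : Continuous f) (a b : ℝ) (hab : a < b)
    (h : ∀ x ∈ Set.Ioo a b, f x = 0) : f a = 0 ∧ f b = 0 := by
  have : closure (Set.Ioo a b) ⊆ {x | f x = 0} :=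
    (isClosed_eq hf continuous_const).closure_subset_iff.2 h
  rw [closure_Ioo hab.ne] at this
  exact ⟨this ⟨le_rfl, hab.le⟩, this ⟨hab.le, le_rfl⟩⟩

lemma aux_core2 (u : ℝ → ℂ) (hu : ContDiff ℝ 2 u) (h1 : ∀ x ∈ Set.Ioo (0:ℝ) (1/3), u x = 0)
    (h2 : ∀ x ∈ Set.Ioo (4/3 : ℝ) 2, u x = 0) :
    ∃ C : ℝ, 0 ≤ C ∧ ∀ s t : ℝ, 0 < s →
      ‖∫ η in (1/3 : ℝ)..(4/3), u η * Complex.exp (((-(2 * π * s) : ℝ) + (2 * π * t : ℝ) * Complex.I) * η)‖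
      ≤ C / (1 + t ^ 2) * (Real.exp (-(2 * π * s / 3)) / Real.sqrt s) := by
  have hc1 : Continuous (deriv u) := hu.continuous_deriv (by norm_num)
  have hd : ∀ a b : ℝ, (∀ x ∈ Set.Ioo a b, u x = 0) → ∀ x ∈ Set.Ioo a b, deriv u x = 0 := by
    intro a b h x hx
    have : u =ᶠ[nhds x] fun _ => 0 := by
      filter_upwards [isOpen_Ioo.mem_nhds hx] with y hy using h y hy
    rw [this.deriv_eq]; simp
  apply aux_core u hu
  · exact (aux_zero u hu.continuous _ _ (by norm_num) h1).2
  · exact (aux_zero u hu.continuous _ _ (by norm_num) h2).1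
  · exact (aux_zero _ hc1 _ _ (by norm_num) (hd _ _ h1)).2
  · exact (aux_zero _ hc1 _ _ (by norm_num) (hd _ _ h2)).1

lemma aux_fourier (ψ : SchwartzMap ℝ ℂ) (j k : ℤ) (ξ : ℝ) :
    𝓕 (psiI ψ j k) ξ = (Real.sqrt (len j) : ℂ) *
      Complex.exp (-(2 * π * ctr j k * ξ : ℝ) * Complex.I) * 𝓕 (⇑ψ) (len j * ξ) := by
  have hL : 0 < len j := by unfold len; positivity
  set L := len j
  set c := ctr j k
  have hsq := Real.sqrt_pos.2 hL
  have hss := Real.mul_self_sqrt hL.le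
  rw [Real.fourier_eq', Real.fourier_eq']
  set g : ℝ → ℂ := fun w => Complex.exp ((-2 * π * (L * w + c) * ξ : ℝ) * Complex.I) *
    (((Real.sqrt L)⁻¹ : ℝ) * ψ w) with hg
  have e1 : ∀ v : ℝ, Complex.exp (((-2 * π * inner ℝ v ξ : ℝ) : ℂ) * Complex.I) • psiI ψ j k v
      = g ((v - c) / L) := by
    intro v
    have : L * ((v - c) / L) + c = v := by field_simp; ring
    simp only [hg, this, psiI, smul_eq_mul]
    congr 4
    simp; ring
  simp_rw [e1]
  rw [integral_sub_right_eq_self (fun v => g (v / L)) c, Measure.integral_comp_div, ← integral_const_mul,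
    ← integral_smul]
  congr 1
  ext w
  have e2 : Complex.exp ((-2 * π * (L * w + c) * ξ : ℝ) * Complex.I)
    = Complex.exp (-(2 * π * c * ξ : ℝ) * Complex.I) *
      Complex.exp (((-2 * π * inner ℝ w (L * ξ) : ℝ) : ℂ) * Complex.I) := by
    rw [← Complex.exp_add]
    congr 1
    simp; ring
  have e3 : (L : ℂ) * (((Real.sqrt L)⁻¹ : ℝ) : ℂ) = (Real.sqrt L : ℂ) := by
    rw [← Complex.ofReal_mul]; congr 1; field_simp; linarith
  simp only [hg]
  rw [e2, abs_of_pos hL, ← e3]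
  simp only [smul_eq_mul, Complex.real_smul]
  ring

/-- Localization of `F_I`: there is a constant `C > 0`, depending only on `ψ`, such that for
every dyadic interval `I ⊆ ℝ` with `|I| ≤ 1` (i.e. generation `j ≥ 0`), all `x ∈ ℝ` and `y > 0`,
`|F_I(x+iy)| ≤ C |I|^{-1/2} (1+(y/|I|)²)/(1+((x-C_I)/|I|)²) · e^{-2πy/3}/√y`. -/
theorem stmt_11 (ψ : SchwartzMap ℝ ℂ)
    (hsupp : Function.support (𝓕 ⇑ψ) ⊆
      Set.Icc (-(4 / 3) : ℝ) (-(1 / 3)) ∪ Set.Icc (1 / 3) (4 / 3)) :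
    ∃ C : ℝ, 0 < C ∧ ∀ j : ℕ, ∀ k : ℤ, ∀ x y : ℝ, 0 < y →
      ‖FI ψ (j : ℤ) k x y‖
        ≤ C * (Real.sqrt (len (j : ℤ)))⁻¹ *
            ((1 + (y / len (j : ℤ)) ^ 2) / (1 + ((x - ctr (j : ℤ) k) / len (j : ℤ)) ^ 2)) *
            (Real.exp (-(2 * π * y / 3)) / Real.sqrt y) := by
  have hcoe : 𝓕 (⇑ψ) = ⇑(𝓕 ψ : SchwartzMap ℝ ℂ) := (SchwartzMap.fourier_coe ψ).symm
  have hsm : ContDiff ℝ 2 (𝓕 (⇑ψ)) := by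
    rw [hcoe]; exact (𝓕 ψ : SchwartzMap ℝ ℂ).smooth 2
  set p : ℝ → ℂ := 𝓕 (⇑ψ) with hp
  have hzero : ∀ x, x ∉ Set.Icc (-(4 / 3) : ℝ) (-(1 / 3)) ∪ Set.Icc (1 / 3) (4 / 3) → p x = 0 := by
    intro x hx
    by_contra h
    exact hx (hsupp h)
  have hof : ContDiff ℝ 2 (fun η : ℝ => (η : ℂ)) := Complex.ofRealCLM.contDiff
  obtain ⟨C1, hC1, H1⟩ := aux_core2 (fun η => (η : ℂ) * p η) (hof.mul hsm)
    (by intro x hx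
        rw [hzero x, mul_zero]
        rintro (h | h) <;> linarith [h.1, h.2, hx.1, hx.2])
    (by intro x hx
        rw [hzero x, mul_zero]
        rintro (h | h) <;> linarith [h.1, h.2, hx.1, hx.2])
  obtain ⟨C2, hC2, H2⟩ := aux_core2 (fun η => (η : ℂ) * p (-η)) (hof.mul (hsm.comp contDiff_neg))
    (by intro x hx
        rw [hzero (-x), mul_zero]
        rintro (h | h) <;> linarith [h.1, h.2, hx.1, hx.2])
    (by intro x hx
        rw [hzero (-x), mul_zero]
        rintro (h | h) <;> linarith [h.1, h.2, hx.1, hx.2])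
  refine ⟨4 * π * (C1 + C2) + 1, by positivity, fun j k x y hy => ?_⟩
  have hL : 0 < len (j : ℤ) := by unfold len; positivity
  have hL1 : len (j : ℤ) ≤ 1 := by
    unfold len
    exact zpow_le_one_of_nonpos₀ (by norm_num) (by simp)
  have hF : FI ψ j k x y = ∫ ξ : ℝ, ((4 * π * |ξ| * Real.sqrt (len j) * Real.exp (-(2 * π * |ξ| * y)) : ℝ) : ℂ) *
    𝓕 (psiI ψ j k) ξ * Complex.exp (2 * (π : ℂ) * Complex.I * (x : ℂ) * (ξ : ℂ)) := rfl
  simp_rw [aux_fourier, ← hp] at hF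
  set L := len (j : ℤ)
  set c := ctr (j : ℤ) k
  set t := (x - c) / L with ht
  set s := y / L with hs
  have hs0 : 0 < s := by positivity
  have hsq := Real.sqrt_pos.2 hL
  have hss := Real.mul_self_sqrt hL.le
  set G : ℝ → ℂ := fun η => ((4 * π * |η| : ℝ) : ℂ) * p η *
    Complex.exp (((-(2 * π * s * |η|) : ℝ) + (2 * π * t * η : ℝ) * Complex.I)) with hG
  have hGc : Continuous G := by
    have := hsm.continuous
    simp only [hG]; fun_prop
  have e1 : ∀ ξ : ℝ, ((4 * π * |ξ| * Real.sqrt L * Real.exp (-(2 * π * |ξ| * y)) : ℝ) : ℂ) *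
      ((Real.sqrt L : ℂ) * Complex.exp (-(2 * π * c * ξ : ℝ) * Complex.I) * p (L * ξ)) *
      Complex.exp (2 * (π : ℂ) * Complex.I * (x : ℂ) * (ξ : ℂ)) = G (L * ξ) := by
    intro ξ
    have a1 : L * t = x - c := by rw [ht]; field_simp
    have a2 : L * s = y := by rw [hs]; field_simp
    have a3 : Complex.exp (((-(2 * π * s * |L * ξ|) : ℝ) + (2 * π * t * (L * ξ) : ℝ) * Complex.I))
      = (Real.exp (-(2 * π * |ξ| * y)) : ℂ) * Complex.exp (-(2 * π * c * ξ : ℝ) * Complex.I) *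
        Complex.exp (2 * (π : ℂ) * Complex.I * (x : ℂ) * (ξ : ℂ)) := by
      rw [Complex.ofReal_exp, ← Complex.exp_add, ← Complex.exp_add]
      rw [abs_mul, abs_of_pos hL, show 2 * π * s * (L * |ξ|) = 2 * π * |ξ| * (L * s) by ring, a2,
        show 2 * π * t * (L * ξ) = 2 * π * ξ * (L * t) by ring, a1]
      congr 1
      push_cast; ring
    have a4 : (Real.sqrt L : ℂ) * (Real.sqrt L : ℂ) = (L : ℂ) := by
      rw [← Complex.ofReal_mul, hss]
    simp only [hG]
    rw [a3, abs_mul, abs_of_pos hL]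
    push_cast
    rw [← a4]
    ring
  simp_rw [e1] at hF
  rw [Measure.integral_comp_mul_left] at hF
  have hsplit : ∫ η, G η = (∫ η in (-(4/3) : ℝ)..(-(1/3)), G η) + ∫ η in (1/3 : ℝ)..(4/3), G η := by
    rw [intervalIntegral.integral_of_le (by norm_num), intervalIntegral.integral_of_le (by norm_num),
      ← integral_Icc_eq_integral_Ioc, ← integral_Icc_eq_integral_Ioc,
      ← setIntegral_union _ measurableSet_Icc (hGc.continuousOn.integrableOn_Icc)
        (hGc.continuousOn.integrableOn_Icc)]
    · symm
      apply setIntegral_eq_integral_of_forall_compl_eq_zero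
      intro η hη
      simp [hG, hzero η hη]
    · rw [Set.disjoint_left]
      intro a ha hb
      linarith [ha.2, hb.1]
  have hpos : ∫ η in (1/3 : ℝ)..(4/3), G η = (4 * π : ℂ) * ∫ η in (1/3 : ℝ)..(4/3),
      (η : ℂ) * p η * Complex.exp (((-(2 * π * s) : ℝ) + (2 * π * t : ℝ) * Complex.I) * η) := by
    rw [← intervalIntegral.integral_const_mul]
    apply intervalIntegral.integral_congr
    intro η hη
    rw [Set.uIcc_of_le (by norm_num)] at hη
    have : |η| = η := abs_of_pos (by linarith [hη.1])
    simp only [hG, this]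
    rw [show (((-(2 * π * s) : ℝ) : ℂ) + (2 * π * t : ℝ) * Complex.I) * η
      = (((-(2 * π * s * η) : ℝ) + (2 * π * t * η : ℝ) * Complex.I)) by push_cast; ring]
    push_cast; ring
  have hneg : ∫ η in (-(4/3) : ℝ)..(-(1/3)), G η = (4 * π : ℂ) * ∫ η in (1/3 : ℝ)..(4/3),
      (η : ℂ) * p (-η) * Complex.exp (((-(2 * π * s) : ℝ) + (2 * π * (-t) : ℝ) * Complex.I) * η) := by
    rw [← intervalIntegral.integral_comp_neg, ← intervalIntegral.integral_const_mul]
    apply intervalIntegral.integral_congr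
    intro η hη
    rw [Set.uIcc_of_le (by norm_num)] at hη
    have : |-η| = η := by rw [abs_neg]; exact abs_of_pos (by linarith [hη.1])
    simp only [hG, this]
    rw [show (((-(2 * π * s) : ℝ) : ℂ) + (2 * π * (-t) : ℝ) * Complex.I) * η
      = (((-(2 * π * s * η) : ℝ) + (2 * π * t * (-η) : ℝ) * Complex.I)) by push_cast; ring]
    push_cast; ring
  have B1 := H1 s t hs0
  have B2 := H2 s (-t) hs0
  rw [neg_sq] at B2
  have hn4 : ‖(4 * π : ℂ)‖ = 4 * π := by
    rw [norm_mul, Complex.norm_real, Real.norm_of_nonneg Real.pi_pos.le]; norm_num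
  set W := Real.exp (-(2 * π * s / 3)) / Real.sqrt s with hW
  have hW0 : 0 ≤ W := by positivity
  have hGb : ‖∫ η, G η‖ ≤ 4 * π * (C1 + C2) / (1 + t ^ 2) * W := by
    rw [hsplit, hpos, hneg]
    refine (norm_add_le _ _).trans ?_
    rw [norm_mul (4 * π : ℂ), norm_mul (4 * π : ℂ), hn4]
    have hpi := Real.pi_pos
    calc _ ≤ 4 * π * (C2 / (1 + t ^ 2) * W) + 4 * π * (C1 / (1 + t ^ 2) * W) := by gcongr
      _ = _ := by ring
  have hWb : L⁻¹ * W ≤ (Real.sqrt L)⁻¹ * (Real.exp (-(2 * π * y / 3)) / Real.sqrt y) := by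
    have hsy : Real.sqrt s = Real.sqrt y / Real.sqrt L := by rw [hs, Real.sqrt_div hy.le]
    have hyq := Real.sqrt_pos.2 hy
    have : L⁻¹ * W = (Real.sqrt L)⁻¹ * (Real.exp (-(2 * π * s / 3)) / Real.sqrt y) := by
      rw [hW, hsy, ← hss, Real.sqrt_mul_self hsq.le]
      field_simp
    rw [this]
    have hys : y ≤ s := by rw [hs, le_div_iff₀ hL]; nlinarith
    have hpi := Real.pi_pos
    gcongr
  rw [hF, norm_smul, Real.norm_of_nonneg (abs_nonneg _), abs_of_pos (inv_pos.2 hL)]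
  set V := Real.exp (-(2 * π * y / 3)) / Real.sqrt y with hV
  have hV0 : 0 ≤ V := by positivity
  have hpi := Real.pi_pos
  calc L⁻¹ * ‖∫ η, G η‖ ≤ L⁻¹ * (4 * π * (C1 + C2) / (1 + t ^ 2) * W) := by gcongr
    _ = 4 * π * (C1 + C2) / (1 + t ^ 2) * (L⁻¹ * W) := by ring
    _ ≤ 4 * π * (C1 + C2) / (1 + t ^ 2) * ((Real.sqrt L)⁻¹ * V) := by gcongr
    _ = (4 * π * (C1 + C2)) * (Real.sqrt L)⁻¹ * (1 / (1 + t ^ 2)) * V := by ring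
    _ ≤ (4 * π * (C1 + C2) + 1) * (Real.sqrt L)⁻¹ * ((1 + s ^ 2) / (1 + t ^ 2)) * V := by
        gcongr
        · linarith
        · nlinarith
end
end

section
/- Let f : ℝ → ℂ be a Schwartz function. Then for every x ∈ ℝ and y > 0, both of the following series converge absolutely and Σ_{k∈ℤ} (f * P_y)(x - k) = Σ_{n∈ℤ} f̂(n) e^{-2π|n|y} e^{2πinx}. (That is, the Poisson extension of the periodization of f, viewed on the disc via w = e^{2πi(x+iy)}, equals Σ_{n≥0} f̂(n) wⁿ + Σ_{n<0} f̂(n) \bar{w}^{-n}.) -/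
open MeasureTheory Complex Real
open scoped FourierTransform

noncomputable section

/-- The Poisson kernel of the upper half-plane, `P_y(t) = (1/π) y/(t²+y²)`. -/
def poissonKer (y t : ℝ) : ℝ := (1 / π) * y / (t ^ 2 + y ^ 2)

/-- The convolution `(f * P_y)(x) = ∫ f(t) P_y(x-t) dt`. -/
def poissonConv (f : SchwartzMap ℝ ℂ) (y x : ℝ) : ℂ :=
  ∫ t : ℝ, f t * ((poissonKer y (x - t) : ℝ) : ℂ)

lemma poissonKer_continuous {y : ℝ} (hy : 0 < y) : Continuous (poissonKer y) := by
  unfold poissonKer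
  refine Continuous.div (by fun_prop) (by fun_prop) ?_
  intro x
  positivity

lemma poissonKer_nonneg {y : ℝ} (hy : 0 < y) (t : ℝ) : 0 ≤ poissonKer y t := by
  unfold poissonKer
  have := Real.pi_pos
  positivity

lemma poissonKer_le {y : ℝ} (hy : 0 < y) (t : ℝ) : poissonKer y t ≤ 1 / (π * y) := by
  unfold poissonKer
  have := Real.pi_pos
  rw [div_le_div_iff₀ (by positivity) (by positivity)]
  field_simp
  nlinarith [sq_nonneg t]

lemma poissonKer_sq_le {y : ℝ} (hy : 0 < y) (t : ℝ) : t ^ 2 * poissonKer y t ≤ y / π := by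
  unfold poissonKer
  have := Real.pi_pos
  rw [← mul_div_assoc, div_le_div_iff₀ (by positivity) (by positivity)]
  field_simp
  nlinarith [sq_nonneg y]

lemma poissonKer_integrable {y : ℝ} (hy : 0 < y) :
    Integrable (fun t => ((poissonKer y t : ℝ) : ℂ)) := by
  have hpi := Real.pi_pos
  suffices h : Integrable (poissonKer y) from h.ofReal
  refine (integrable_inv_one_add_sq.const_mul (1 / (π * y) + y / π)).mono'
    (poissonKer_continuous hy).aestronglyMeasurable ?_
  filter_upwards with t
  rw [Real.norm_of_nonneg (poissonKer_nonneg hy t), ← div_eq_mul_inv, le_div_iff₀ (by positivity)]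
  nlinarith [poissonKer_le hy t, poissonKer_sq_le hy t]

lemma expAbs_integral {y : ℝ} (hy : 0 < y) (x : ℝ) :
    Integrable (fun v : ℝ => Complex.exp (((-2 * π * v * x : ℝ) : ℂ) * I) *
      ((Real.exp (-(2 * π * |v| * y)) : ℝ) : ℂ)) ∧
    ∫ v : ℝ, Complex.exp (((-2 * π * v * x : ℝ) : ℂ) * I) *
      ((Real.exp (-(2 * π * |v| * y)) : ℝ) : ℂ) = ((poissonKer y x : ℝ) : ℂ) := by
  have hpi := Real.pi_pos
  set F : ℝ → ℂ := fun v : ℝ => Complex.exp (((-2 * π * v * x : ℝ) : ℂ) * I) *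
      ((Real.exp (-(2 * π * |v| * y)) : ℝ) : ℂ) with hF
  set a : ℂ := 2 * π * (y - x * I) with ha
  set b : ℂ := 2 * π * (-y - x * I) with hb
  have ha0 : 0 < a.re := by simp [ha]; positivity
  have hb0 : b.re < 0 := by simp [hb]; positivity
  have e1 : Set.EqOn (fun v : ℝ => Complex.exp (a * v)) F (Set.Iic 0) := by
    intro v hv
    simp only [hF, Complex.ofReal_exp, ← Complex.exp_add, abs_of_nonpos (Set.mem_Iic.1 hv), ha]
    push_cast
    ring_nf
  have e2 : Set.EqOn (fun v : ℝ => Complex.exp (b * v)) F (Set.Ioi 0) := by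
    intro v hv
    simp only [hF, Complex.ofReal_exp, ← Complex.exp_add, abs_of_pos (Set.mem_Ioi.1 hv), hb]
    push_cast
    ring_nf
  have i1 : IntegrableOn F (Set.Iic 0) :=
    (integrableOn_exp_mul_complex_Iic ha0 0).congr_fun e1 measurableSet_Iic
  have i2 : IntegrableOn F (Set.Ioi 0) :=
    (integrableOn_exp_mul_complex_Ioi hb0 0).congr_fun e2 measurableSet_Ioi
  refine ⟨?_, ?_⟩
  · rw [← integrableOn_univ, ← Set.Iic_union_Ioi (a := (0 : ℝ))]
    exact i1.union i2
  · rw [← intervalIntegral.integral_Iic_add_Ioi i1 i2, ← setIntegral_congr_fun measurableSet_Iic e1,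
      ← setIntegral_congr_fun measurableSet_Ioi e2, integral_exp_mul_complex_Iic ha0,
      integral_exp_mul_complex_Ioi hb0]
    have hane : a ≠ 0 := fun h => by simp [h] at ha0
    have hbne : b ≠ 0 := fun h => by simp [h] at hb0
    have hab : a * b = -(4 * π ^ 2 * (x ^ 2 + y ^ 2)) := by
      rw [ha, hb]
      ring_nf
      rw [I_sq]
      ring
    have hs : ((x : ℂ) ^ 2 + (y : ℂ) ^ 2) ≠ 0 := by
      have : x ^ 2 + y ^ 2 ≠ 0 := by positivity
      exact_mod_cast this
    have hp : (π : ℂ) ≠ 0 := by exact_mod_cast hpi.ne'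
    have h1 : Complex.exp (a * ((0 : ℝ) : ℂ)) / a + -Complex.exp (b * ((0 : ℝ) : ℂ)) / b
        = (b - a) / (a * b) := by
      simp only [Complex.ofReal_zero, mul_zero, Complex.exp_zero]
      field_simp
      ring
    rw [h1, hab, ha, hb]
    unfold poissonKer
    push_cast
    field_simp
    ring

lemma fourier_expAbs {y : ℝ} (hy : 0 < y) :
    𝓕 (fun v : ℝ => ((Real.exp (-(2 * π * |v| * y)) : ℝ) : ℂ)) =
      fun x => ((poissonKer y x : ℝ) : ℂ) := by
  ext x
  rw [Real.fourier_real_eq_integral_exp_smul]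
  exact (expAbs_integral hy x).2

lemma fourier_poissonKer {y : ℝ} (hy : 0 < y) (ξ : ℝ) :
    𝓕 (fun x => ((poissonKer y x : ℝ) : ℂ)) ξ = ((Real.exp (-(2 * π * |ξ| * y)) : ℝ) : ℂ) := by
  have hi : Integrable (fun v : ℝ => ((Real.exp (-(2 * π * |v| * y)) : ℝ) : ℂ)) := by
    simpa using (expAbs_integral hy 0).1
  have h := Continuous.fourierInv_fourier_eq
    (f := fun v : ℝ => ((Real.exp (-(2 * π * |v| * y)) : ℝ) : ℂ)) (by fun_prop) hi
    (by rw [fourier_expAbs hy]; exact poissonKer_integrable hy)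
  rw [fourier_expAbs hy] at h
  have h2 := congrFun h (-ξ)
  rw [Real.fourierInv_eq_fourier_neg, neg_neg] at h2
  simpa using h2

lemma poissonConv_continuous (f : SchwartzMap ℝ ℂ) {y : ℝ} (hy : 0 < y) :
    Continuous (poissonConv f y) := by
  unfold poissonConv
  have hc := poissonKer_continuous hy
  refine continuous_of_dominated (bound := fun t => ‖f t‖ * (1 / (π * y))) ?_ ?_ ?_ ?_
  · intro x
    exact (f.continuous.mul (by fun_prop)).aestronglyMeasurable
  · intro x
    filter_upwards with t
    rw [norm_mul, Complex.norm_real, Real.norm_of_nonneg (poissonKer_nonneg hy _)]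
    exact mul_le_mul_of_nonneg_left (poissonKer_le hy _) (norm_nonneg _)
  · exact f.integrable.norm.mul_const _
  · filter_upwards with t
    fun_prop

lemma poissonConv_bound (f : SchwartzMap ℝ ℂ) {y : ℝ} (hy : 0 < y) :
    ∃ C : ℝ, ∀ x, x ^ 2 * ‖poissonConv f y x‖ ≤ C := by
  have hpi := Real.pi_pos
  refine ⟨∫ t, ((2 * (y / π)) * ‖f t‖ + (2 * (1 / (π * y))) * (‖t‖ ^ 2 * ‖f t‖)), fun x => ?_⟩
  have h0 : x ^ 2 * ‖poissonConv f y x‖ =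
      ‖∫ t : ℝ, ((x ^ 2 : ℝ) : ℂ) * (f t * ((poissonKer y (x - t) : ℝ) : ℂ))‖ := by
    rw [integral_const_mul, norm_mul, Complex.norm_real, Real.norm_of_nonneg (sq_nonneg x)]
    rfl
  rw [h0]
  refine norm_integral_le_of_norm_le ((f.integrable.norm.const_mul _).add
    ((f.integrable_pow_mul volume 2).const_mul _)) ?_
  filter_upwards with t
  rw [norm_mul, norm_mul, Complex.norm_real, Complex.norm_real, Real.norm_of_nonneg (sq_nonneg x),
    Real.norm_of_nonneg (poissonKer_nonneg hy _), Real.norm_eq_abs, sq_abs]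
  have h1 : x ^ 2 * poissonKer y (x - t) ≤ 2 * (y / π) + 2 * (1 / (π * y)) * t ^ 2 := by
    have a1 := poissonKer_sq_le hy (x - t)
    have a2 := mul_le_mul_of_nonneg_right (poissonKer_le hy (x - t)) (sq_nonneg t)
    have a3 : x ^ 2 * poissonKer y (x - t) ≤
        (2 * (x - t) ^ 2 + 2 * t ^ 2) * poissonKer y (x - t) :=
      mul_le_mul_of_nonneg_right (by nlinarith [sq_nonneg (x - 2 * t)]) (poissonKer_nonneg hy _)
    nlinarith
  have h2 := mul_le_mul_of_nonneg_left h1 (norm_nonneg (f t))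
  linarith

lemma poissonConv_isBigO (f : SchwartzMap ℝ ℂ) {y : ℝ} (hy : 0 < y) :
    poissonConv f y =O[Filter.cocompact ℝ] (fun x : ℝ => |x| ^ (-2 : ℝ)) := by
  obtain ⟨C, hC⟩ := poissonConv_bound f hy
  refine Asymptotics.IsBigO.of_bound C ?_
  have hne : ∀ᶠ x : ℝ in Filter.cocompact ℝ, x ≠ 0 := by
    have := (isCompact_singleton (x := (0 : ℝ))).compl_mem_cocompact
    filter_upwards [this] with x hx using hx
  filter_upwards [hne] with x hx
  have hx2 : 0 < x ^ 2 := by positivity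
  rw [Real.norm_of_nonneg (by positivity), Real.rpow_neg (abs_nonneg x), Real.rpow_two, sq_abs,
    ← div_eq_mul_inv, le_div_iff₀ hx2, mul_comm]
  exact hC x

lemma fourier_poissonConv (f : SchwartzMap ℝ ℂ) {y : ℝ} (hy : 0 < y) (ξ : ℝ) :
    𝓕 (poissonConv f y) ξ = 𝓕 ⇑f ξ * ((Real.exp (-(2 * π * |ξ| * y)) : ℝ) : ℂ) := by
  rw [← fourier_poissonKer hy, ← Real.fourier_mul_convolution_eq f.integrable
    (poissonKer_integrable hy)]
  rfl

/-- For Schwartz `f`, `x ∈ ℝ` and `y > 0`, both series converge absolutely and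
`Σ_{k∈ℤ} (f * P_y)(x-k) = Σ_{n∈ℤ} f̂(n) e^{-2π|n|y} e^{2πinx}`. -/
theorem stmt_12 (f : SchwartzMap ℝ ℂ) (x y : ℝ) (hy : 0 < y) :
    Summable (fun k : ℤ => ‖poissonConv f y (x - (k : ℝ))‖) ∧
    Summable (fun n : ℤ =>
      ‖𝓕 ⇑f (n : ℝ) * ((Real.exp (-(2 * π * |(n : ℝ)| * y)) : ℝ) : ℂ) *
        Complex.exp (2 * (π : ℂ) * Complex.I * (n : ℂ) * (x : ℂ))‖) ∧
    (∑' k : ℤ, poissonConv f y (x - (k : ℝ)))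
      = ∑' n : ℤ, 𝓕 ⇑f (n : ℝ) * ((Real.exp (-(2 * π * |(n : ℝ)| * y)) : ℝ) : ℂ) *
          Complex.exp (2 * (π : ℂ) * Complex.I * (n : ℂ) * (x : ℂ)) := by
  have hO := poissonConv_isBigO f hy
  have hS : Summable (fun n : ℤ => 𝓕 ⇑f (n : ℝ)) :=
    summable_of_isBigO (Real.summable_abs_int_rpow one_lt_two)
      (((𝓕 f).isBigO_cocompact_rpow (-2)).comp_tendsto Int.tendsto_coe_cofinite)
  have hle : ∀ n : ℤ, Real.exp (-(2 * π * |(n : ℝ)| * y)) ≤ 1 := by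
    intro n
    rw [Real.exp_le_one_iff]
    have := Real.pi_pos
    have : 0 ≤ 2 * π * |(n : ℝ)| * y := by positivity
    linarith
  have hS2 : Summable (fun n : ℤ => 𝓕 (poissonConv f y) (n : ℝ)) := by
    refine Summable.of_norm_bounded hS.norm (fun n => ?_)
    rw [fourier_poissonConv f hy, norm_mul, Complex.norm_real, Real.norm_of_nonneg (exp_nonneg _)]
    exact mul_le_of_le_one_right (norm_nonneg _) (hle n)
  have hexp : ∀ n : ℤ, fourier n (x : UnitAddCircle) =
      Complex.exp (2 * (π : ℂ) * Complex.I * (n : ℂ) * (x : ℂ)) := by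
    intro n
    rw [fourier_coe_apply]
    simp
  have hterm : ∀ n : ℤ, 𝓕 (poissonConv f y) (n : ℝ) * fourier n (x : UnitAddCircle) =
      𝓕 ⇑f (n : ℝ) * ((Real.exp (-(2 * π * |(n : ℝ)| * y)) : ℝ) : ℂ) *
        Complex.exp (2 * (π : ℂ) * Complex.I * (n : ℂ) * (x : ℂ)) := by
    intro n
    rw [hexp, fourier_poissonConv f hy]
  refine ⟨?_, ?_, ?_⟩
  · -- shift: restrict norm on the compact set {x}
    have h := ((isBigO_norm_restrict_cocompact ⟨_, poissonConv_continuous f hy⟩ two_pos hO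
      ⟨{x}, isCompact_singleton⟩).comp_tendsto Int.tendsto_coe_cofinite)
    have h' := summable_of_isBigO (Real.summable_abs_int_rpow one_lt_two) h
    have h3 : Summable (fun k : ℤ => ‖poissonConv f y (x + (k : ℝ))‖) := by
      refine Summable.of_nonneg_of_le (fun _ => norm_nonneg _) (fun k => ?_) h'
      exact ContinuousMap.norm_coe_le_norm (((⟨_, poissonConv_continuous f hy⟩ : C(ℝ, ℂ)).comp
        (ContinuousMap.addRight (k : ℝ))).restrict ({x} : Set ℝ)) ⟨x, rfl⟩
    have h4 := (Equiv.neg ℤ).summable_iff.2 h3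
    refine h4.congr (fun k => ?_)
    simp [sub_eq_add_neg]
  · refine hS2.norm.congr (fun n => ?_)
    rw [← hterm, norm_mul, hexp]
    have : (2 * (π : ℂ) * Complex.I * (n : ℂ) * (x : ℂ)) = ((2 * π * n * x : ℝ) : ℂ) * I := by
      push_cast
      ring
    rw [this, Complex.norm_exp_ofReal_mul_I, mul_one]
  · have hP := Real.tsum_eq_tsum_fourier_of_rpow_decay_of_summable
      (poissonConv_continuous f hy) one_lt_two hO hS2 x
    rw [← tsum_congr hterm, ← hP, ← (Equiv.neg ℤ).tsum_eq]
    refine tsum_congr (fun k => ?_)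
    simp
end
end
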